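/- Every 3×3 complex matrix can be written as a product of at most 4 Toeplitz matrices, i.e., Toep₃ ≤ 4. -/

import Mathlib

def IsToeplitz {n : ℕ} (M : Matrix (Fin n) (Fin n) ℂ) : Prop :=
  ∀ (i j : Fin n) (hi : (i : ℕ) + 1 < n) (hj : (j : ℕ) + 1 < n),
    M i j = M ⟨i + 1, hi⟩ ⟨j + 1, hj⟩

/-!
Reversing the order of the columns of a matrix turns Hankel factors into Toeplitz factors, so an
invertible `M` is to be written as a product of three Hankel matrices.

A factorization `A = H₁ * H₂` into Hankel matrices amounts to an invertible symmetric `S` for which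
`S * A` and `S.adjugate` are Hankel. Counting equations shows that a nonzero such `S` always exists,
and a singular one yields an eigenvector of `A` or of `Aᵀ` on the conic `v 0 * v 2 = v 1 ^ 2`.
For `A = M * H⁻¹` with `H` a generic Hankel matrix there is no such eigenvector. To construct `H`,
start from an invertible Hankel matrix and add generic multiples of the rank-one Hankel matrices
`p pᵀ`, where `p` lies on the moment curve.

A matrix of rank two is an invertible matrix times a Toeplitz matrix with the same kernel, and a
matrix of rank at most one is a product of three explicit Toeplitz matrices.
-/

open Filter Matrix Polynomial

section ToeplitzHankel

variable {R : Type*} {n : ℕ}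

/-- Toeplitz matrices over an arbitrary type; `IsToeplitz` is definitionally the case of `ℂ`. -/
def IsToeplitzOver (M : Matrix (Fin n) (Fin n) R) : Prop :=
  ∀ (i j : Fin n) (hi : (i : ℕ) + 1 < n) (hj : (j : ℕ) + 1 < n),
    M i j = M ⟨i + 1, hi⟩ ⟨j + 1, hj⟩

/-- Hankel matrices: those constant along each antidiagonal. Reversing the order of the rows, or of
the columns, exchanges them with the Toeplitz matrices. -/
def IsHankel (H : Matrix (Fin n) (Fin n) R) : Prop :=
  ∀ (i j : Fin n) (hi : (i : ℕ) + 1 < n) (hj : (j : ℕ) + 1 < n),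
    H i ⟨j + 1, hj⟩ = H ⟨i + 1, hi⟩ j

theorem IsHankel.isToeplitzOver_submatrix_id_rev {H : Matrix (Fin n) (Fin n) R}
    (h : IsHankel H) : IsToeplitzOver (H.submatrix id Fin.rev) := by
  intro i j hi hj
  have hrev : j.rev = ⟨(Fin.rev ⟨j + 1, hj⟩ : ℕ) + 1, by grind⟩ := by grind
  simpa only [submatrix_apply, id, ← hrev] using h i (Fin.rev ⟨j + 1, hj⟩) hi (by grind)

theorem IsHankel.isToeplitzOver_submatrix_rev_id {H : Matrix (Fin n) (Fin n) R}
    (h : IsHankel H) : IsToeplitzOver (H.submatrix Fin.rev id) := by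
  intro i j hi hj
  have hrev : i.rev = ⟨(Fin.rev ⟨i + 1, hi⟩ : ℕ) + 1, by grind⟩ := by grind
  simpa only [submatrix_apply, id, ← hrev] using (h (Fin.rev ⟨i + 1, hi⟩) j (by grind) hj).symm

theorem IsToeplitzOver.submatrix_rev_rev {T : Matrix (Fin n) (Fin n) R} (h : IsToeplitzOver T) :
    IsToeplitzOver (T.submatrix Fin.rev Fin.rev) := by
  intro i j hi hj
  have hrev (l : Fin n) (hl : (l : ℕ) + 1 < n) :
      l.rev = ⟨(Fin.rev ⟨l + 1, hl⟩ : ℕ) + 1, by grind⟩ := by grind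
  simpa only [submatrix_apply, ← hrev] using
    (h (Fin.rev ⟨i + 1, hi⟩) (Fin.rev ⟨j + 1, hj⟩) (by grind) (by grind)).symm

theorem IsHankel.add [Add R] {H K : Matrix (Fin n) (Fin n) R} (hH : IsHankel H)
    (hK : IsHankel K) : IsHankel (H + K) := fun i j hi hj =>
  congrArg₂ (· + ·) (hH i j hi hj) (hK i j hi hj)

theorem IsHankel.smul {S : Type*} [SMul S R] {H : Matrix (Fin n) (Fin n) R} (hH : IsHankel H)
    (c : S) : IsHankel (c • H) := fun i j hi hj =>
  congrArg (c • ·) (hH i j hi hj)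

theorem isToeplitzOver_fin_three (a b c d e : R) :
    IsToeplitzOver !![a, b, c; d, a, b; e, d, a] := by
  intro i j hi hj
  fin_cases i <;> fin_cases j <;> first | rfl | simp at hi hj

theorem isHankel_fin_three_iff {H : Matrix (Fin 3) (Fin 3) R} :
    IsHankel H ↔ H.IsSymm ∧ H 0 2 = H 1 1 := by
  constructor
  · intro h
    have h01 : H 0 1 = H 1 0 := h 0 0 (by decide) (by decide)
    have h12 : H 1 2 = H 2 1 := h 1 1 (by decide) (by decide)
    have h02 : H 0 2 = H 1 1 := h 0 1 (by decide) (by decide)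
    have h20 : H 1 1 = H 2 0 := h 1 0 (by decide) (by decide)
    refine ⟨IsSymm.ext fun i j => ?_, h02⟩
    fin_cases i <;> fin_cases j <;> simp [*]
  · rintro ⟨hsymm, h02⟩ i j hi hj
    have h20 := hsymm.apply 0 2
    fin_cases i <;> fin_cases j <;> simp at hi hj
    exacts [hsymm.apply 1 0, h02, by simpa [h20] using h02.symm, hsymm.apply 2 1]

end ToeplitzHankel

section Cross

variable {R K : Type*} [CommRing R] [Field K]

theorem cross_eq_zero_iff {v w : Fin 3 → R} :
    v ⨯₃ w = 0 ↔ ∀ i j, v i * w j = v j * w i := by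
  rw [cross_apply]
  constructor
  · intro h i j
    have h0 : v 1 * w 2 - v 2 * w 1 = 0 := congrFun h 0
    have h1 : v 2 * w 0 - v 0 * w 2 = 0 := congrFun h 1
    have h2 : v 0 * w 1 - v 1 * w 0 = 0 := congrFun h 2
    fin_cases i <;> fin_cases j <;> grind
  · intro h
    simp [h 1 2, h 2 0, h 0 1]

theorem exists_eq_smul_of_cross_eq_zero {v w : Fin 3 → K} (hv : v ≠ 0) (h : v ⨯₃ w = 0) :
    ∃ c : K, w = c • v := by
  by_contra! hc
  refine crossProduct_ne_zero_iff_linearIndependent.2 ?_ h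
  rw [LinearIndependent.pair_iff' hv]
  exact fun c hcv => hc c hcv.symm

theorem cross_mulVec_mulVec_eq_zero {v w : Fin 3 → K} (N : Matrix (Fin 3) (Fin 3) K)
    (h : v ⨯₃ w = 0) : (N *ᵥ v) ⨯₃ (N *ᵥ w) = 0 := by
  by_cases hv : v = 0
  · simp [hv]
  · obtain ⟨c, rfl⟩ := exists_eq_smul_of_cross_eq_zero hv h
    rw [mulVec_smul, map_smul, cross_self, smul_zero]

theorem cross_map {S : Type*} [CommRing S] (f : R →+* S) (v w : Fin 3 → R) :
    f ∘ (v ⨯₃ w) = (f ∘ v) ⨯₃ (f ∘ w) := by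
  ext i
  fin_cases i <;> simp [cross_apply]

end Cross

section Adjugate

variable {R K : Type*} [CommRing R] [Field K]

theorem adjugate_col_eq_cross (A : Matrix (Fin 3) (Fin 3) R) (k : Fin 3) :
    A.adjugate.col k = A.row (k + 1) ⨯₃ A.row (k + 2) := by
  rw [adjugate_fin_three, cross_apply]
  ext i
  fin_cases k <;> fin_cases i <;> simp [Matrix.col, Matrix.row] <;> ring

theorem mulVec_adjugate_col_eq_zero {n : Type*} [Fintype n] [DecidableEq n] {A : Matrix n n R}
    (h : A.det = 0) (k : n) : A *ᵥ A.adjugate.col k = 0 := by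
  ext i
  have hmul := congrFun₂ (mul_adjugate A) i k
  rwa [h, zero_smul] at hmul

theorem cross_adjugate_col_eq_zero {A : Matrix (Fin 3) (Fin 3) R} {u : Fin 3 → R}
    (hu : A *ᵥ u = 0) (k : Fin 3) : u ⨯₃ A.adjugate.col k = 0 := by
  have hrow (i : Fin 3) : u ⬝ᵥ A.row i = 0 := (dotProduct_comm _ _).trans (congrFun hu i)
  rw [adjugate_col_eq_cross, cross_cross_eq_smul_sub_smul', hrow, dotProduct_comm, hrow,
    zero_smul, zero_smul, sub_zero]

theorem minors_eq_of_adjugate_eq_zero {A : Matrix (Fin 3) (Fin 3) R} (h : A.adjugate = 0)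
    (i j k l : Fin 3) : A i j * A k l = A i l * A k j := by
  have hcyc (m : Fin 3) : A.row (m + 1) ⨯₃ A.row (m + 2) = 0 := by
    rw [← adjugate_col_eq_cross, h]
    rfl
  have hrow (i k : Fin 3) : A.row i ⨯₃ A.row k = 0 := by
    have hik : i = k ∨ ∃ m : Fin 3, i = m + 1 ∧ k = m + 2 ∨ i = m + 2 ∧ k = m + 1 := by
      decide +revert
    obtain rfl | ⟨m, ⟨rfl, rfl⟩ | ⟨rfl, rfl⟩⟩ := hik
    · exact cross_self _
    · exact hcyc m
    · rw [← cross_anticomm, hcyc, neg_zero]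
  simpa [mul_comm] using cross_eq_zero_iff.1 (hrow i k) j l

theorem exists_eq_vecMulVec_of_adjugate_eq_zero {A : Matrix (Fin 3) (Fin 3) K}
    (h : A.adjugate = 0) : ∃ a b, A = vecMulVec a b := by
  by_cases hA : A = 0
  · exact ⟨0, 0, by simp [hA]⟩
  · obtain ⟨k, l, hkl⟩ : ∃ k l, A k l ≠ 0 := by
      by_contra! hzero
      exact hA (Matrix.ext hzero)
    refine ⟨A.col l, (A k l)⁻¹ • A.row k, Matrix.ext fun i j => ?_⟩
    have hminor := minors_eq_of_adjugate_eq_zero h i j k l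
    simp only [vecMulVec_apply, col_apply, row_apply, Pi.smul_apply, smul_eq_mul]
    field_simp
    exact hminor

theorem exists_eq_smul_vecMulVec_self_of_adjugate_eq_zero {A : Matrix (Fin 3) (Fin 3) K}
    (hA : A ≠ 0) (hsymm : A.IsSymm) (hadj : A.adjugate = 0) :
    ∃ c : K, ∃ w : Fin 3 → K, c ≠ 0 ∧ w ≠ 0 ∧ A = c • vecMulVec w w := by
  obtain ⟨i, j, hij⟩ : ∃ i j, A i j ≠ 0 := by
    by_contra! hzero
    exact hA (Matrix.ext hzero)
  have hminor := minors_eq_of_adjugate_eq_zero hadj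
  have hii : A i i ≠ 0 := by
    intro hii
    have hdiag := hminor i i j j
    rw [hii, zero_mul, hsymm.apply i j] at hdiag
    exact hij (mul_self_eq_zero.1 hdiag.symm)
  refine ⟨(A i i)⁻¹, A.row i, inv_ne_zero hii, fun h => hij (congrFun h j),
    Matrix.ext fun k l => ?_⟩
  have hkl : A i i * A k l = A i l * A i k := (hminor i i k l).trans (by rw [hsymm.apply i k])
  rw [Matrix.smul_apply, vecMulVec_apply, row_apply, row_apply, smul_eq_mul,
    eq_inv_mul_iff_mul_eq₀ hii, hkl, mul_comm]

end Adjugate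

section Symmetrizer

variable {R K : Type*} [CommRing R] [Field K]

theorem exists_linearIndependent_pair_mem_ker {V W : Type*} [AddCommGroup V] [Module K V]
    [AddCommGroup W] [Module K W] [FiniteDimensional K V] [FiniteDimensional K W] (f : V →ₗ[K] W)
    (h : Module.finrank K W + 1 < Module.finrank K V) :
    ∃ x y, LinearIndependent K ![x, y] ∧ f x = 0 ∧ f y = 0 := by
  have hker : 1 < Module.finrank K (LinearMap.ker f) := by
    have := f.finrank_range_add_finrank_ker
    have := Submodule.finrank_le (LinearMap.range f)
    omega
  have : Nontrivial (LinearMap.ker f) := Module.nontrivial_of_finrank_pos (zero_lt_one.trans hker)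
  obtain ⟨x, hx⟩ := exists_ne (0 : LinearMap.ker f)
  obtain ⟨y, hxy⟩ := exists_linearIndependent_pair_of_one_lt_finrank hker hx
  refine ⟨x, y, ?_, x.2, y.2⟩
  rw [LinearIndependent.pair_iff] at hxy ⊢
  exact fun s t hst => hxy s t (Subtype.ext hst)

theorem exists_binary_quadratic_form_eq_zero [IsAlgClosed K] (a b c : K) :
    ∃ s t : K, (s ≠ 0 ∨ t ≠ 0) ∧ a * s ^ 2 + b * (s * t) + c * t ^ 2 = 0 := by
  by_cases ha : a = 0
  · exact ⟨1, 0, by simp, by simp [ha]⟩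
  · obtain ⟨x, hx⟩ := IsAlgClosed.exists_root (C a * X ^ 2 + C b * X + C c)
      (by rw [degree_quadratic ha]; decide)
    exact ⟨x, 1, by simp, by simpa using hx⟩

theorem adjugate_smul_add_smul_fin_three (A B : Matrix (Fin 3) (Fin 3) R) (s t : R) :
    (s • A + t • B).adjugate = s ^ 2 • A.adjugate +
      (s * t) • ((A + B).adjugate - A.adjugate - B.adjugate) + t ^ 2 • B.adjugate := by
  simp only [adjugate_fin_three]
  ext i j
  fin_cases i <;> fin_cases j <;> simp <;> ring

/-- The entries of `A - Aᵀ` above the diagonal, arranged as the vector which represents this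
skew-symmetric matrix through the cross product. -/
def axialVector : Matrix (Fin 3) (Fin 3) R →ₗ[R] Fin 3 → R where
  toFun A := ![A 1 2 - A 2 1, A 2 0 - A 0 2, A 0 1 - A 1 0]
  map_add' A B := by ext i; fin_cases i <;> simp <;> ring
  map_smul' c A := by ext i; fin_cases i <;> simp <;> ring

theorem isSymm_of_axialVector_eq_zero {A : Matrix (Fin 3) (Fin 3) R} (h : axialVector A = 0) :
    A.IsSymm := by
  have h12 : A 1 2 = A 2 1 := sub_eq_zero.1 (congrFun h 0)
  have h20 : A 2 0 = A 0 2 := sub_eq_zero.1 (congrFun h 1)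
  have h01 : A 0 1 = A 1 0 := sub_eq_zero.1 (congrFun h 2)
  refine IsSymm.ext fun i j => ?_
  fin_cases i <;> fin_cases j <;> simp [*]

/-- Four linear equations cutting out the Hankel matrices. -/
def hankelDefect : Matrix (Fin 3) (Fin 3) R →ₗ[R] (Fin 3 → R) × R :=
  axialVector.prod (entryLinearMap R R 0 2 - entryLinearMap R R 1 1)

theorem isHankel_of_hankelDefect_eq_zero {A : Matrix (Fin 3) (Fin 3) R}
    (h : hankelDefect A = 0) : IsHankel A :=
  isHankel_fin_three_iff.2 ⟨isSymm_of_axialVector_eq_zero (congrArg Prod.fst h),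
    sub_eq_zero.1 (congrArg Prod.snd h)⟩

-- Symmetry of `S` and the Hankel property of `S * A` are `3 + 4` linear equations in `9` unknowns.
-- On the pencil they leave, the remaining condition on `S.adjugate` is one quadratic equation.
theorem exists_isSymm_isHankel_mul_isHankel_adjugate [IsAlgClosed K]
    (A : Matrix (Fin 3) (Fin 3) K) :
    ∃ S : Matrix (Fin 3) (Fin 3) K,
      S ≠ 0 ∧ S.IsSymm ∧ IsHankel (S * A) ∧ IsHankel S.adjugate := by
  let φ : Matrix (Fin 3) (Fin 3) K →ₗ[K] (Fin 3 → K) × (Fin 3 → K) × K :=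
    axialVector.prod (hankelDefect ∘ₗ LinearMap.mulRight K A)
  obtain ⟨X, Y, hXY, hX, hY⟩ := exists_linearIndependent_pair_mem_ker φ
    (by simp [Module.finrank_matrix])
  let q (S : Matrix (Fin 3) (Fin 3) K) : K := S.adjugate 0 2 - S.adjugate 1 1
  obtain ⟨s, t, hst, hq⟩ :=
    exists_binary_quadratic_form_eq_zero (q X) (q (X + Y) - q X - q Y) (q Y)
  have hker : φ (s • X + t • Y) = 0 := by
    rw [map_add, map_smul, map_smul, hX, hY, smul_zero, smul_zero, add_zero]
  have hsymm : (s • X + t • Y).IsSymm := isSymm_of_axialVector_eq_zero (congrArg Prod.fst hker)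
  refine ⟨s • X + t • Y, fun h => ?_, hsymm,
    isHankel_of_hankelDefect_eq_zero (congrArg Prod.snd hker), isHankel_fin_three_iff.2 ⟨?_, ?_⟩⟩
  · obtain ⟨rfl, rfl⟩ := LinearIndependent.pair_iff.1 hXY s t h
    simp at hst
  · exact hsymm.adjugate
  · rw [adjugate_smul_add_smul_fin_three]
    simp only [q, Matrix.add_apply, Matrix.sub_apply, Matrix.smul_apply, smul_eq_mul] at hq ⊢
    linear_combination hq

end Symmetrizer

section ConicEigenvector

variable {K : Type*} [Field K]

/-- Homogeneous coordinates of a point of the conic that the moment curve `t ↦ (1, t, t²)`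
parametrizes, point at infinity included. -/
def IsConicPoint (v : Fin 3 → K) : Prop :=
  v ≠ 0 ∧ v 0 * v 2 = v 1 ^ 2

/-- The obstruction to factoring `A` into two Hankel matrices: an eigenvector of `A`, possibly with
eigenvalue `0`, which lies on the conic. -/
def HasConicEigenvector (A : Matrix (Fin 3) (Fin 3) K) : Prop :=
  ∃ v, IsConicPoint v ∧ v ⨯₃ (A *ᵥ v) = 0

theorem isConicPoint_of_isHankel_smul_vecMulVec_self {c : K} {w : Fin 3 → K} (hc : c ≠ 0)
    (hw : w ≠ 0) (h : IsHankel (c • vecMulVec w w)) : IsConicPoint w :=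
  ⟨hw, (mul_left_cancel₀ hc (isHankel_fin_three_iff.1 h).2).trans (sq _).symm⟩

theorem hasConicEigenvector_of_isHankel_adjugate {A S : Matrix (Fin 3) (Fin 3) K}
    (hS : S.IsSymm) (hSA : (S * A).IsSymm) (hdet : S.det = 0) (hadj : IsHankel S.adjugate)
    (hadj0 : S.adjugate ≠ 0) : HasConicEigenvector A := by
  have hadj2 : S.adjugate.adjugate = 0 := by
    rw [adjugate_adjugate S (by simp), hdet]
    simp
  obtain ⟨c, v, hc, hv, hcv⟩ := exists_eq_smul_vecMulVec_self_of_adjugate_eq_zero hadj0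
    (isHankel_fin_three_iff.1 hadj).1 hadj2
  obtain ⟨k, hk⟩ := Function.ne_iff.1 hv
  have hcol : S.adjugate.col k = (c * v k) • v := by
    ext i
    rw [hcv]
    simp [vecMulVec_apply, mul_comm, mul_left_comm]
  have hck : c * v k ≠ 0 := mul_ne_zero hc hk
  have hSv : S *ᵥ v = 0 := by
    have hScol := mulVec_adjugate_col_eq_zero hdet k
    rw [hcol, mulVec_smul] at hScol
    exact (smul_eq_zero.1 hScol).resolve_left hck
  have hSAv : S *ᵥ (A *ᵥ v) = 0 := by
    rw [mulVec_mulVec, ← hSA, transpose_mul, hS, ← mulVec_mulVec, hSv, mulVec_zero]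
  refine ⟨v, isConicPoint_of_isHankel_smul_vecMulVec_self hc hv (hcv ▸ hadj), ?_⟩
  have hcross := cross_adjugate_col_eq_zero hSAv k
  rw [hcol, map_smul, smul_eq_zero] at hcross
  rw [← cross_anticomm, hcross.resolve_left hck, neg_zero]

theorem hasConicEigenvector_transpose_of_isHankel_mul {A S : Matrix (Fin 3) (Fin 3) K}
    (hA : A.det ≠ 0) (hS0 : S ≠ 0) (hS : S.IsSymm) (hadj : S.adjugate = 0)
    (hSA : IsHankel (S * A)) : HasConicEigenvector Aᵀ := by
  obtain ⟨c, w, hc, hw, rfl⟩ := exists_eq_smul_vecMulVec_self_of_adjugate_eq_zero hS0 hS hadj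
  have hmul : c • vecMulVec w w * A = c • vecMulVec w (Aᵀ *ᵥ w) := by
    rw [smul_mul, vecMulVec_mul, mulVec_transpose]
  have hcross : w ⨯₃ (Aᵀ *ᵥ w) = 0 := by
    refine cross_eq_zero_iff.2 fun i j => mul_left_cancel₀ hc ?_
    have hsymm := (isHankel_fin_three_iff.1 hSA).1.apply j i
    rwa [hmul] at hsymm
  obtain ⟨μ, hμ⟩ := exists_eq_smul_of_cross_eq_zero hw hcross
  have hμ0 : μ ≠ 0 := by
    rintro rfl
    refine hw (eq_zero_of_mulVec_eq_zero (by rwa [det_transpose]) (hμ.trans (zero_smul _ _)))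
  refine ⟨w, isConicPoint_of_isHankel_smul_vecMulVec_self (mul_ne_zero hc hμ0) hw ?_, hcross⟩
  rwa [hmul, hμ, vecMulVec_smul, smul_smul] at hSA

theorem exists_eq_mul_two_isHankel [IsAlgClosed K] {A : Matrix (Fin 3) (Fin 3) K} (hA : A.det ≠ 0)
    (hconic : ¬ HasConicEigenvector A) (hconicT : ¬ HasConicEigenvector Aᵀ) :
    ∃ H₁ H₂, IsHankel H₁ ∧ IsHankel H₂ ∧ A = H₁ * H₂ := by
  obtain ⟨S, hS0, hS, hSA, hadj⟩ := exists_isSymm_isHankel_mul_isHankel_adjugate A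
  have hdet : S.det ≠ 0 := by
    intro hdet
    by_cases hadj0 : S.adjugate = 0
    · exact hconicT (hasConicEigenvector_transpose_of_isHankel_mul hA hS0 hS hadj0 hSA)
    · exact hconic (hasConicEigenvector_of_isHankel_adjugate hS (isHankel_fin_three_iff.1 hSA).1
        hdet hadj hadj0)
  refine ⟨S.det⁻¹ • S.adjugate, S * A, hadj.smul _, hSA, ?_⟩
  rw [smul_mul, ← Matrix.mul_assoc, adjugate_mul, smul_mul, Matrix.one_mul,
    inv_smul_smul₀ hdet]

end ConicEigenvector

section GenericPosition

variable {R K : Type*} [CommRing R] [Field K]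

theorem eventually_eval_ne_zero [IsDomain R] {p : R[X]} (hp : p ≠ 0) :
    ∀ᶠ x in cofinite, p.eval x ≠ 0 := by
  simpa [eventually_cofinite, ← IsRoot.def] using finite_setOfPred_isRoot hp

theorem eventually_eval_comp_ne_zero [IsDomain R] {ι : Type*} {P : ι → R[X]} (hP : P ≠ 0) :
    ∀ᶠ t in cofinite, eval t ∘ P ≠ 0 := by
  obtain ⟨i, hi⟩ := Function.ne_iff.1 hP
  filter_upwards [eventually_eval_ne_zero hi] with t ht h
  exact ht (congrFun h i)

theorem eventually_add_smul_ne_zero {V : Type*} [AddCommGroup V] [Module K V] {v w : V}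
    (h : v ≠ 0 ∨ w ≠ 0) : ∀ᶠ s : K in cofinite, v + s • w ≠ 0 := by
  rw [eventually_cofinite]
  refine Set.Subsingleton.finite fun s hs t ht => ?_
  simp only [not_not, Set.mem_ofPred_eq, ne_eq] at hs ht
  by_contra hst
  have hw : w = 0 := by
    have hw : (s - t) • w = 0 := by
      rw [sub_smul, sub_eq_zero]
      exact add_left_cancel (hs.trans ht.symm)
    exact (smul_eq_zero.1 hw).resolve_left (sub_ne_zero.2 hst)
  have hv : v = 0 := by simpa [hw] using hs
  exact h.elim (· hv) (· hw)

theorem eventually_det_add_smul_ne_zero {n : Type*} [Fintype n] [DecidableEq n]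
    {A : Matrix n n K} (B : Matrix n n K) (hA : A.det ≠ 0) :
    ∀ᶠ s : K in cofinite, (A + s • B).det ≠ 0 := by
  have heval (s : K) : (A.map C + (X : K[X]) • B.map C).det.eval s = (A + s • B).det := by
    rw [eval_det]
    congr 1
    ext i j
    simp [mul_comm]
  have hp : (A.map C + (X : K[X]) • B.map C).det ≠ 0 := by
    intro h
    have h0 := heval 0
    rw [h, eval_zero, zero_smul, add_zero] at h0
    exact hA h0.symm
  simpa only [heval] using eventually_eval_ne_zero hp

theorem eval_comp_cross (f g : Fin 3 → R[X]) (t : R) :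
    eval t ∘ (f ⨯₃ g) = (eval t ∘ f) ⨯₃ (eval t ∘ g) :=
  cross_map (evalRingHom t) f g

-- At a parameter `t` where the sum vanishes, the two curves are parallel; that leaves finitely many
-- `t`, each of which excludes at most one `s`.
theorem eventually_forall_eval_comp_add_smul_ne_zero {P Q : Fin 3 → K[X]} (hPQ : P ⨯₃ Q ≠ 0)
    (h : ∀ t, eval t ∘ P ≠ 0 ∨ eval t ∘ Q ≠ 0) :
    ∀ᶠ s : K in cofinite, ∀ t, eval t ∘ P + s • (eval t ∘ Q) ≠ 0 := by
  have hfin : {t | ¬ eval t ∘ (P ⨯₃ Q) ≠ 0}.Finite := eventually_eval_comp_ne_zero hPQ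
  filter_upwards [(eventually_all_finite hfin).2 fun t _ => eventually_add_smul_ne_zero (h t)]
    with s hs t hst
  refine hs t (not_not.2 ?_) hst
  rw [eval_comp_cross, eq_neg_of_add_eq_zero_left hst, map_neg, map_smul, LinearMap.neg_apply,
    LinearMap.smul_apply, cross_self, smul_zero, neg_zero]

/-- The point with parameter `t` on the moment curve `t ↦ (1, t, t², …)`. -/
def momentVec {R : Type*} [Monoid R] (n : ℕ) (t : R) : Fin n → R := fun i => t ^ (i : ℕ)

theorem isHankel_vecMulVec_momentVec {R : Type*} [Monoid R] (n : ℕ) (t : R) :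
    IsHankel (vecMulVec (momentVec n t) (momentVec n t)) := by
  intro i j _ _
  simp only [vecMulVec_apply, momentVec, ← pow_add, add_right_comm, add_assoc]

theorem eventually_dotProduct_momentVec_ne_zero {n : ℕ} {v : Fin n → K} (hv : v ≠ 0) :
    ∀ᶠ x in cofinite, v ⬝ᵥ momentVec n x ≠ 0 := by
  classical
  have hp : ofFn n v ≠ 0 := fun h => hv (injective_ofFn n (h.trans (ofFn_zero n).symm))
  filter_upwards [eventually_eval_ne_zero hp] with x hx
  simpa [ofFn_eq_sum_monomial, eval_finsetSum, eval_monomial, dotProduct, momentVec] using hx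

theorem eventually_cross_momentVec_ne_zero {v : Fin 3 → K} (hv : v ≠ 0) :
    ∀ᶠ x in cofinite, v ⨯₃ momentVec 3 x ≠ 0 := by
  refine (Set.finite_singleton (v 1 / v 0)).subset fun x hx => ?_
  have hx : v ⨯₃ momentVec 3 x = 0 := not_not.1 hx
  have h1 : v 0 * x = v 1 := by simpa [momentVec] using cross_eq_zero_iff.1 hx 0 1
  have h2 : v 0 * x ^ 2 = v 2 := by simpa [momentVec] using cross_eq_zero_iff.1 hx 0 2
  have h0 : v 0 ≠ 0 := by
    intro h0
    rw [h0, zero_mul] at h1 h2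
    exact hv (funext (Fin.forall_fin_succ.2 ⟨h0, Fin.forall_fin_two.2 ⟨h1.symm, h2.symm⟩⟩))
  exact eq_div_of_mul_eq h0 (by rw [mul_comm, h1])

theorem cross_add_smul_mulVec (A B : Matrix (Fin 3) (Fin 3) R) (f g : Fin 3 → R) (s : R) :
    f ⨯₃ ((A + s • B) *ᵥ g) = f ⨯₃ (A *ᵥ g) + s • (f ⨯₃ (B *ᵥ g)) := by
  rw [add_mulVec, smul_mulVec, map_add, map_smul]

theorem cross_vecMulVec_self_mulVec (f g p : Fin 3 → R) :
    f ⨯₃ (vecMulVec p p *ᵥ g) = (p ⬝ᵥ g) • (f ⨯₃ p) := by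
  rw [vecMulVec_mulVec, op_smul_eq_smul, map_smul]

theorem eventually_cross_add_smul_momentVec_mulVec_ne_zero (H : Matrix (Fin 3) (Fin 3) K)
    {f g : Fin 3 → K} (hf : f ≠ 0) (hg : g ≠ 0) : ∀ᶠ x in cofinite, ∀ᶠ s : K in cofinite,
      f ⨯₃ ((H + s • vecMulVec (momentVec 3 x) (momentVec 3 x)) *ᵥ g) ≠ 0 := by
  filter_upwards [eventually_dotProduct_momentVec_ne_zero hg,
    eventually_cross_momentVec_ne_zero hf] with x hxg hxf
  rw [dotProduct_comm] at hxg
  simpa only [cross_add_smul_mulVec, cross_vecMulVec_self_mulVec] using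
    eventually_add_smul_ne_zero (Or.inr (smul_ne_zero hxg hxf))

theorem exists_isHankel_cross_mulVec_ne_zero [Infinite K] {ι : Type*} [Finite ι]
    {f g : ι → Fin 3 → K} (hf : ∀ i, f i ≠ 0) (hg : ∀ i, g i ≠ 0) :
    ∃ H, IsHankel H ∧ H.det ≠ 0 ∧ ∀ i, f i ⨯₃ (H *ᵥ g i) ≠ 0 := by
  let J : Matrix (Fin 3) (Fin 3) K := !![0, 0, 1; 0, 1, 0; 1, 0, 0]
  have hJ : IsHankel J := isHankel_fin_three_iff.2
    ⟨by ext i j; fin_cases i <;> fin_cases j <;> rfl, rfl⟩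
  have hJdet : J.det ≠ 0 := by simp [J, det_fin_three]
  obtain ⟨x, hx⟩ := (eventually_all.2 fun i =>
    eventually_cross_add_smul_momentVec_mulVec_ne_zero J (hf i) (hg i)).exists
  obtain ⟨s, hs, hdet⟩ :=
    ((eventually_all.2 hx).and (eventually_det_add_smul_ne_zero _ hJdet)).exists
  exact ⟨_, hJ.add ((isHankel_vecMulVec_momentVec 3 x).smul s), hdet, hs⟩

theorem eval_comp_map_C_mulVec {m n : Type*} [Fintype n] (A : Matrix m n R) (g : n → R[X])
    (t : R) : eval t ∘ (A.map C *ᵥ g) = A *ᵥ (eval t ∘ g) := by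
  ext i
  simp [mulVec, dotProduct, eval_finsetSum]

theorem eval_comp_cross_map_C_mulVec (A : Matrix (Fin 3) (Fin 3) R) (f g : Fin 3 → R[X]) (t : R) :
    eval t ∘ (f ⨯₃ (A.map C *ᵥ g)) = (eval t ∘ f) ⨯₃ (A *ᵥ (eval t ∘ g)) := by
  rw [eval_comp_cross, eval_comp_map_C_mulVec]

theorem cross_cross_vecMulVec_self_mulVec (H : Matrix (Fin 3) (Fin 3) R) (f g p : Fin 3 → R) :
    (f ⨯₃ (H *ᵥ g)) ⨯₃ (f ⨯₃ (vecMulVec p p *ᵥ g)) =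
      ((g ⬝ᵥ p) * (f ⨯₃ (H *ᵥ g) ⬝ᵥ p)) • f := by
  rw [cross_vecMulVec_self_mulVec, map_smul, cross_cross_eq_smul_sub_smul', dot_self_cross,
    zero_smul, sub_zero, smul_smul, dotProduct_comm p g]

-- A generic `x` makes the two summands of the perturbed cross product nonparallel at `t₀`, and the
-- second one nonzero at the finitely many zeros of the first.
theorem eventually_forall_cross_add_smul_momentVec_mulVec_ne_zero
    {H : Matrix (Fin 3) (Fin 3) K} {f g : Fin 3 → K[X]} (hf : ∀ t, eval t ∘ f ≠ 0)
    (hg : ∀ t, eval t ∘ g ≠ 0) {t₀ : K} (h₀ : (eval t₀ ∘ f) ⨯₃ (H *ᵥ (eval t₀ ∘ g)) ≠ 0) :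
    ∀ᶠ x in cofinite, ∀ᶠ s : K in cofinite, ∀ t, (eval t ∘ f) ⨯₃
      ((H + s • vecMulVec (momentVec 3 x) (momentVec 3 x)) *ᵥ (eval t ∘ g)) ≠ 0 := by
  let P (A : Matrix (Fin 3) (Fin 3) K) : Fin 3 → K[X] := f ⨯₃ (A.map C *ᵥ g)
  have hP (A : Matrix (Fin 3) (Fin 3) K) (t : K) :
      eval t ∘ P A = (eval t ∘ f) ⨯₃ (A *ᵥ (eval t ∘ g)) := eval_comp_cross_map_C_mulVec A f g t
  have hPH : P H ≠ 0 := fun h => h₀ <| by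
    rw [← hP, h]
    exact funext fun _ => eval_zero
  have hfin : {t | ¬ eval t ∘ P H ≠ 0}.Finite := eventually_eval_comp_ne_zero hPH
  have hzeros := (eventually_all_finite hfin).2 fun t _ =>
    (eventually_dotProduct_momentVec_ne_zero (hg t)).and
      (eventually_cross_momentVec_ne_zero (hf t))
  filter_upwards [hzeros, eventually_dotProduct_momentVec_ne_zero (hg t₀),
    eventually_dotProduct_momentVec_ne_zero h₀] with x hx hxg hxP
  let p : Fin 3 → K := momentVec 3 x
  have hcross : P H ⨯₃ P (vecMulVec p p) ≠ 0 := fun h => by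
    have hcross := eval_comp_cross (P H) (P (vecMulVec p p)) t₀
    rw [h, hP, hP, cross_cross_vecMulVec_self_mulVec] at hcross
    exact smul_ne_zero (mul_ne_zero hxg hxP) (hf t₀)
      (hcross.symm.trans (funext fun _ => eval_zero))
  have hpencil := eventually_forall_eval_comp_add_smul_ne_zero hcross fun t => by
    refine or_iff_not_imp_left.2 fun ht => ?_
    rw [hP, cross_vecMulVec_self_mulVec, dotProduct_comm]
    exact smul_ne_zero (hx t ht).1 (hx t ht).2
  simpa only [cross_add_smul_mulVec, hP] using hpencil

theorem exists_isHankel_forall_cross_mulVec_ne_zero [Infinite K] {ι : Type*} [Finite ι]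
    {f g : ι → Fin 3 → K[X]} (hf : ∀ i t, eval t ∘ f i ≠ 0) (hg : ∀ i t, eval t ∘ g i ≠ 0) :
    ∃ H, IsHankel H ∧ H.det ≠ 0 ∧
      ∀ i t, (eval t ∘ f i) ⨯₃ (H *ᵥ (eval t ∘ g i)) ≠ 0 := by
  obtain ⟨H, hH, hdet, h₀⟩ :=
    exists_isHankel_cross_mulVec_ne_zero (fun i => hf i 0) (fun i => hg i 0)
  obtain ⟨x, hx⟩ := (eventually_all.2 fun i =>
    eventually_forall_cross_add_smul_momentVec_mulVec_ne_zero (hf i) (hg i) (h₀ i)).exists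
  obtain ⟨s, hs, hdet'⟩ :=
    ((eventually_all.2 hx).and (eventually_det_add_smul_ne_zero _ hdet)).exists
  exact ⟨_, hH.add ((isHankel_vecMulVec_momentVec 3 x).smul s), hdet', hs⟩

end GenericPosition

section ConicAvoidance

variable {K : Type*} [Field K]

/-- The two polynomial curves which together cover the conic projectively: the moment curve, and the
constant curve at its point at infinity. -/
noncomputable def conicCurve : Fin 2 → Fin 3 → K[X] :=
  ![momentVec 3 X, ![0, 0, 1]]

theorem eval_comp_conicCurve_zero (t : K) : eval t ∘ conicCurve 0 = momentVec 3 t := by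
  ext i
  simp [conicCurve, momentVec]

theorem eval_comp_conicCurve_one (t : K) : eval t ∘ conicCurve 1 = ![0, 0, 1] := by
  ext i
  fin_cases i <;> simp [conicCurve]

theorem eval_comp_conicCurve_ne_zero (j : Fin 2) (t : K) : eval t ∘ conicCurve j ≠ 0 := by
  fin_cases j
  · exact fun h => one_ne_zero (α := K) (by simpa [conicCurve, momentVec] using congrFun h 0)
  · exact fun h => one_ne_zero (α := K) (by simpa [conicCurve] using congrFun h 2)

theorem IsConicPoint.exists_eq_smul_eval_comp_conicCurve {v : Fin 3 → K} (hv : IsConicPoint v) :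
    ∃ c : K, ∃ j t, c ≠ 0 ∧ v = c • (eval t ∘ conicCurve j) := by
  obtain ⟨hv0, hconic⟩ := hv
  by_cases h0 : v 0 = 0
  · have h1 : v 1 = 0 := by simpa [h0] using hconic.symm
    have hv2 : v = v 2 • (eval 0 ∘ conicCurve 1) := by
      rw [eval_comp_conicCurve_one]
      ext i
      fin_cases i <;> simp [h0, h1]
    exact ⟨v 2, 1, 0, fun h2 => hv0 (by rw [hv2, h2, zero_smul]), hv2⟩
  · refine ⟨v 0, 0, v 1 / v 0, h0, ?_⟩
    rw [eval_comp_conicCurve_zero]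
    have h1 : v 1 = v 0 * (v 1 / v 0) := (mul_div_cancel₀ _ h0).symm
    have h2 : v 2 = v 0 * (v 1 / v 0) ^ 2 := by
      field_simp
      linear_combination hconic
    ext i
    fin_cases i
    exacts [by simp [momentVec], by simpa [momentVec] using h1, by simpa [momentVec] using h2]

theorem exists_isHankel_forall_isConicPoint_cross_ne_zero [Infinite K] {ι : Type*} [Finite ι]
    {F G : ι → Matrix (Fin 3) (Fin 3) K} (hF : ∀ i, (F i).det ≠ 0) (hG : ∀ i, (G i).det ≠ 0) :
    ∃ H, IsHankel H ∧ H.det ≠ 0 ∧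
      ∀ i v, IsConicPoint v → (F i *ᵥ v) ⨯₃ (H *ᵥ (G i *ᵥ v)) ≠ 0 := by
  have hcurve {A : Matrix (Fin 3) (Fin 3) K} (hA : A.det ≠ 0) (j : Fin 2) (t : K) :
      eval t ∘ (A.map C *ᵥ conicCurve j) ≠ 0 := fun h =>
    eval_comp_conicCurve_ne_zero j t
      (eq_zero_of_mulVec_eq_zero hA ((eval_comp_map_C_mulVec A _ t).symm.trans h))
  obtain ⟨H, hH, hdet, hcross⟩ := exists_isHankel_forall_cross_mulVec_ne_zero
    (fun ij : ι × Fin 2 => hcurve (hF ij.1) ij.2) (fun ij => hcurve (hG ij.1) ij.2)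
  refine ⟨H, hH, hdet, fun i v hv h => ?_⟩
  obtain ⟨c, j, t, hc, rfl⟩ := hv.exists_eq_smul_eval_comp_conicCurve
  apply hcross (i, j) t
  simpa [eval_comp_map_C_mulVec, mulVec_smul, hc] using h

theorem exists_isHankel_not_hasConicEigenvector_mul_inv [Infinite K]
    {M : Matrix (Fin 3) (Fin 3) K} (hM : M.det ≠ 0) :
    ∃ H, IsHankel H ∧ H.det ≠ 0 ∧
      ¬ HasConicEigenvector (M * H⁻¹) ∧ ¬ HasConicEigenvector (M * H⁻¹)ᵀ := by
  have hMu : IsUnit M.det := hM.isUnit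
  obtain ⟨H, hH, hdet, hcross⟩ := exists_isHankel_forall_isConicPoint_cross_ne_zero
    (F := ![1, Mᵀ]) (G := ![M⁻¹, 1])
    (Fin.forall_fin_two.2 ⟨by simp, by simpa using hM⟩)
    (Fin.forall_fin_two.2 ⟨by simpa [det_nonsing_inv] using hM, by simp⟩)
  have hHu : IsUnit H.det := hdet.isUnit
  refine ⟨H, hH, hdet, ?_, ?_⟩
  · rintro ⟨v, hv, hpar⟩
    have hpar := cross_mulVec_mulVec_eq_zero (H * M⁻¹) hpar
    have hcancel : H * M⁻¹ * (M * H⁻¹) = 1 := by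
      rw [Matrix.mul_assoc, nonsing_inv_mul_cancel_left _ _ hMu, mul_nonsing_inv _ hHu]
    rw [mulVec_mulVec, hcancel, one_mulVec, ← cross_anticomm, neg_eq_zero, ← mulVec_mulVec] at hpar
    exact hcross 0 v hv (by simpa using hpar)
  · rintro ⟨v, hv, hpar⟩
    have hpar := cross_mulVec_mulVec_eq_zero H hpar
    have hcancel : H * (M * H⁻¹)ᵀ = Mᵀ := by
      rw [transpose_mul, transpose_nonsing_inv, (isHankel_fin_three_iff.1 hH).1,
        mul_nonsing_inv_cancel_left _ _ hHu]
    rw [mulVec_mulVec, hcancel, ← cross_anticomm, neg_eq_zero] at hpar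
    exact hcross 1 v hv (by simpa using hpar)

theorem exists_eq_mul_three_isHankel [IsAlgClosed K] {M : Matrix (Fin 3) (Fin 3) K}
    (hM : M.det ≠ 0) :
    ∃ H₁ H₂ H₃, IsHankel H₁ ∧ IsHankel H₂ ∧ IsHankel H₃ ∧ M = H₁ * H₂ * H₃ := by
  obtain ⟨H, hH, hdet, hconic, hconicT⟩ := exists_isHankel_not_hasConicEigenvector_mul_inv hM
  have hA : (M * H⁻¹).det ≠ 0 := by simp [det_nonsing_inv, hM, hdet]
  obtain ⟨H₁, H₂, hH₁, hH₂, hmul⟩ := exists_eq_mul_two_isHankel hA hconic hconicT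
  refine ⟨H₁, H₂, H, hH₁, hH₂, hH, ?_⟩
  rw [← hmul, nonsing_inv_mul_cancel_right _ _ hdet.isUnit]

theorem exists_eq_mul_three_isToeplitzOver [IsAlgClosed K]
    {M : Matrix (Fin 3) (Fin 3) K} (hM : M.det ≠ 0) :
    ∃ T₁ T₂ T₃, IsToeplitzOver T₁ ∧ IsToeplitzOver T₂ ∧ IsToeplitzOver T₃ ∧
      M = T₁ * T₂ * T₃ := by
  have hMrev : (M.submatrix id Fin.rev).det ≠ 0 := by
    have hdet : (M.submatrix id Fin.rev).det = _ := det_permute' Fin.revPerm M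
    obtain hsign | hsign := Int.units_eq_one_or (Equiv.Perm.sign (Fin.revPerm (n := 3))) <;>
      simpa [hdet, hsign] using hM
  obtain ⟨H₁, H₂, H₃, h₁, h₂, h₃, hmul⟩ := exists_eq_mul_three_isHankel hMrev
  refine ⟨_, _, _, h₁.isToeplitzOver_submatrix_id_rev, h₂.isToeplitzOver_submatrix_rev_id,
    h₃.isToeplitzOver_submatrix_id_rev, ?_⟩
  calc M = (M.submatrix id Fin.rev).submatrix id Fin.rev := by simp [Fin.rev_involutive.comp_self]
    _ = (H₁ * H₂ * H₃).submatrix id Fin.rev := by rw [hmul]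
    _ = (H₁ * H₂).submatrix id id * H₃.submatrix id Fin.rev :=
      submatrix_mul _ _ _ _ _ Function.bijective_id
    _ = _ := by rw [submatrix_mul _ _ _ _ _ Fin.rev_bijective]

end ConicAvoidance

section Singular

variable {K : Type*} [Field K]

theorem exists_linearEquiv_comp_eq_of_ker_eq {V W : Type*} [AddCommGroup V] [Module K V]
    [AddCommGroup W] [Module K W] {f g : V →ₗ[K] W} [FiniteDimensional K (LinearMap.range g)]
    (h : LinearMap.ker f = LinearMap.ker g) : ∃ e : W ≃ₗ[K] W, f = e ∘ₗ g := by
  let e₀ : LinearMap.range g ≃ₗ[K] LinearMap.range f :=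
    g.quotKerEquivRange.symm.trans
      ((Submodule.quotEquivOfEq _ _ h.symm).trans f.quotKerEquivRange)
  obtain ⟨e, he⟩ := Submodule.exists_linearEquiv_restrict_eq e₀
  refine ⟨e, LinearMap.ext fun x => ?_⟩
  have hx : e₀ (g.rangeRestrict x) = f.rangeRestrict x :=
    congrArg ((Submodule.quotEquivOfEq _ _ h.symm).trans f.quotKerEquivRange)
      (g.quotKerEquivRange_symm_apply_image x (LinearMap.mem_range_self g x))
  exact (congrArg Subtype.val hx).symm.trans (he _)

theorem exists_eq_mul_of_forall_mulVec_eq_zero_iff {n : Type*} [Fintype n] [DecidableEq n]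
    {A B : Matrix n n K} (h : ∀ v, A *ᵥ v = 0 ↔ B *ᵥ v = 0) :
    ∃ P : Matrix n n K, P.det ≠ 0 ∧ A = P * B := by
  obtain ⟨e, he⟩ := exists_linearEquiv_comp_eq_of_ker_eq (f := toLin' A) (g := toLin' B)
    (Submodule.ext h)
  refine ⟨LinearMap.toMatrix' e, ?_, ?_⟩
  · rw [LinearMap.det_toMatrix']
    exact e.isUnit_det'.ne_zero
  · simpa [LinearMap.toMatrix'_comp] using congrArg LinearMap.toMatrix' he

theorem exists_isToeplitzOver_mulVec_eq_zero_iff_of_apply_zero_ne_zero {k : Fin 3 → K}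
    (hk : k 0 ≠ 0) : ∃ T, IsToeplitzOver T ∧ ∀ v, T *ᵥ v = 0 ↔ ∃ c : K, v = c • k := by
  obtain ⟨p, hp⟩ : ∃ p, k 1 = k 0 * p := ⟨k 1 / k 0, (mul_div_cancel₀ _ hk).symm⟩
  obtain ⟨q, hq⟩ : ∃ q, k 2 = k 0 * q := ⟨k 2 / k 0, (mul_div_cancel₀ _ hk).symm⟩
  -- The lower left entry makes the last row a consequence of the first two.
  refine ⟨!![-p, 1, 0; p ^ 2 - q, -p, 1; p * (2 * q - p ^ 2), p ^ 2 - q, -p],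
    isToeplitzOver_fin_three _ _ _ _ _, fun v => ⟨fun hv => ⟨v 0 / k 0, ?_⟩, ?_⟩⟩
  · have h0 : -p * v 0 + v 1 = 0 := by
      simpa [mulVec, dotProduct, Fin.sum_univ_three] using congrFun hv 0
    have h1 : (p ^ 2 - q) * v 0 + -p * v 1 + v 2 = 0 := by
      simpa [mulVec, dotProduct, Fin.sum_univ_three] using congrFun hv 1
    have hv1 : v 1 = v 0 / k 0 * k 1 := by
      rw [hp, ← mul_assoc, div_mul_cancel₀ _ hk]
      linear_combination h0
    have hv2 : v 2 = v 0 / k 0 * k 2 := by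
      rw [hq, ← mul_assoc, div_mul_cancel₀ _ hk]
      linear_combination h1 + p * h0
    ext i
    fin_cases i
    exacts [(div_mul_cancel₀ _ hk).symm, hv1, hv2]
  · rintro ⟨c, rfl⟩
    ext i
    fin_cases i <;> simp [mulVec, dotProduct, Fin.sum_univ_three, hp, hq] <;> ring

theorem exists_isToeplitzOver_mulVec_eq_zero_iff {k : Fin 3 → K} (hk : k ≠ 0) :
    ∃ T, IsToeplitzOver T ∧ ∀ v, T *ᵥ v = 0 ↔ ∃ c : K, v = c • k := by
  by_cases h0 : k 0 ≠ 0
  · exact exists_isToeplitzOver_mulVec_eq_zero_iff_of_apply_zero_ne_zero h0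
  by_cases h2 : k 2 ≠ 0
  · obtain ⟨T, hT, hker⟩ :=
      exists_isToeplitzOver_mulVec_eq_zero_iff_of_apply_zero_ne_zero (k := k ∘ Fin.rev) h2
    refine ⟨_, hT.submatrix_rev_rev, fun v => ?_⟩
    have hrev : T.submatrix Fin.rev Fin.rev *ᵥ v = (T *ᵥ (v ∘ Fin.rev)) ∘ Fin.rev :=
      submatrix_mulVec_equiv T v Fin.rev Fin.revPerm
    have hinj {w w' : Fin 3 → K} : w ∘ Fin.rev = w' ∘ Fin.rev ↔ w = w' :=
      Fin.rev_surjective.injective_comp_right.eq_iff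
    have hzero : T.submatrix Fin.rev Fin.rev *ᵥ v = 0 ↔ T *ᵥ (v ∘ Fin.rev) = 0 := by
      rw [hrev]
      exact hinj (w' := 0)
    rw [hzero, hker]
    exact exists_congr fun c => hinj (w' := c • k)
  · rw [not_not] at h0 h2
    have h1 : k 1 ≠ 0 := fun h1 =>
      hk (funext (Fin.forall_fin_succ.2 ⟨h0, Fin.forall_fin_two.2 ⟨h1, h2⟩⟩))
    refine ⟨!![0, 0, 1; 0, 0, 0; 1, 0, 0], isToeplitzOver_fin_three _ _ _ _ _,
      fun v => ⟨fun hv => ⟨v 1 / k 1, ?_⟩, ?_⟩⟩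
    · have hv2 : v 2 = 0 := by
        simpa [mulVec, dotProduct, Fin.sum_univ_three] using congrFun hv 0
      have hv0 : v 0 = 0 := by
        simpa [mulVec, dotProduct, Fin.sum_univ_three] using congrFun hv 2
      ext i
      fin_cases i <;> simp [*]
    · rintro ⟨c, rfl⟩
      ext i
      fin_cases i <;> simp [mulVec, dotProduct, Fin.sum_univ_three, *]

theorem mulVec_eq_zero_iff_of_adjugate_col_ne_zero {A : Matrix (Fin 3) (Fin 3) K}
    (hA : A.det = 0) {j : Fin 3} (hj : A.adjugate.col j ≠ 0) (v : Fin 3 → K) :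
    A *ᵥ v = 0 ↔ ∃ c : K, v = c • A.adjugate.col j := by
  constructor
  · intro hv
    refine exists_eq_smul_of_cross_eq_zero hj ?_
    rw [← cross_anticomm, cross_adjugate_col_eq_zero hv, neg_zero]
  · rintro ⟨c, rfl⟩
    rw [mulVec_smul, mulVec_adjugate_col_eq_zero hA, smul_zero]

theorem exists_eq_mul_isToeplitzOver_of_adjugate_ne_zero {A : Matrix (Fin 3) (Fin 3) K}
    (hA : A.det = 0) (hadj : A.adjugate ≠ 0) :
    ∃ P T : Matrix (Fin 3) (Fin 3) K, P.det ≠ 0 ∧ IsToeplitzOver T ∧ A = P * T := by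
  obtain ⟨j, hj⟩ : ∃ j, A.adjugate.col j ≠ 0 := by
    by_contra! h
    exact hadj (Matrix.ext fun i j => congrFun (h j) i)
  obtain ⟨T, hT, hker⟩ := exists_isToeplitzOver_mulVec_eq_zero_iff hj
  obtain ⟨P, hP, hmul⟩ := exists_eq_mul_of_forall_mulVec_eq_zero_iff fun v =>
    (mulVec_eq_zero_iff_of_adjugate_col_ne_zero hA hj v).trans (hker v).symm
  exact ⟨P, T, hP, hT, hmul⟩

theorem exists_vecMulVec_eq_mul_three_isToeplitzOver {R : Type*} [CommRing R] (a b : Fin 3 → R) :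
    ∃ T₁ T₂ T₃ : Matrix (Fin 3) (Fin 3) R, IsToeplitzOver T₁ ∧ IsToeplitzOver T₂ ∧
      IsToeplitzOver T₃ ∧ vecMulVec a b = T₁ * T₂ * T₃ := by
  refine ⟨!![a 0, 0, 0; a 1, a 0, 0; a 2, a 1, a 0], !![0, 0, 1; 0, 0, 0; 0, 0, 0],
    !![b 2, 0, 0; b 1, b 2, 0; b 0, b 1, b 2], isToeplitzOver_fin_three _ _ _ _ _,
    isToeplitzOver_fin_three _ _ _ _ _, isToeplitzOver_fin_three _ _ _ _ _, ?_⟩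
  ext i j
  fin_cases i <;> fin_cases j <;> simp [vecMulVec_apply, Matrix.mul_apply, Fin.sum_univ_three]

end Singular

theorem toep3_le_four_general {K : Type*} [Field K] [IsAlgClosed K]
    (M : Matrix (Fin 3) (Fin 3) K) :
    ∃ L : List (Matrix (Fin 3) (Fin 3) K),
      L.length ≤ 4 ∧ (∀ T ∈ L, IsToeplitzOver T) ∧ L.prod = M := by
  by_cases hdet : M.det = 0
  · by_cases hadj : M.adjugate = 0
    · obtain ⟨a, b, rfl⟩ := exists_eq_vecMulVec_of_adjugate_eq_zero hadj
      obtain ⟨T₁, T₂, T₃, h₁, h₂, h₃, hM⟩ := exists_vecMulVec_eq_mul_three_isToeplitzOver a b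
      exact ⟨[T₁, T₂, T₃], by simp, by simp [h₁, h₂, h₃], by simp [hM, Matrix.mul_assoc]⟩
    · obtain ⟨P, T, hP, hT, rfl⟩ := exists_eq_mul_isToeplitzOver_of_adjugate_ne_zero hdet hadj
      obtain ⟨T₁, T₂, T₃, h₁, h₂, h₃, hM⟩ := exists_eq_mul_three_isToeplitzOver hP
      exact ⟨[T₁, T₂, T₃, T], by simp, by simp [h₁, h₂, h₃, hT], by simp [hM, Matrix.mul_assoc]⟩
  · obtain ⟨T₁, T₂, T₃, h₁, h₂, h₃, hM⟩ := exists_eq_mul_three_isToeplitzOver hdet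
    exact ⟨[T₁, T₂, T₃], by simp, by simp [h₁, h₂, h₃], by simp [hM, Matrix.mul_assoc]⟩

theorem toep3_le_four (M : Matrix (Fin 3) (Fin 3) ℂ) :
    ∃ L : List (Matrix (Fin 3) (Fin 3) ℂ),
      L.length ≤ 4 ∧ (∀ T ∈ L, IsToeplitz T) ∧ L.prod = M :=
  toep3_le_four_general M
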